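/- Let ρ > 0, A > 0 and c ∈ ℝⁿ. Suppose h is continuous on cl(B_{2ρ}(c)), satisfies 0 ≤ h ≤ A, vanishes identically on cl(B_ρ(c)), and is harmonic on the open set {h > 0} ∩ B_{2ρ}(c). Then there is a constant Cₙ depending only on n such that h(x) ≤ Cₙ · A · (|x − c| − ρ)/ρ for all x with ρ ≤ |x − c| ≤ 3ρ/2. In particular h grows at most linearly, at rate Cₙ A/ρ, away from the sphere ∂B_ρ(c). -/

import Mathlib

/-!
Comparison with a Gaussian barrier. For `a > 0` the function `g y = exp (a * (ρ² - |y - c|²))` is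
strictly subharmonic where `n < 2a|y - c|²`, so `a = (n + 1) / (2ρ²)` works on all of
`|y - c| ≥ ρ`. The barrier `2A(1 - g)` vanishes on the inner sphere `|y - c| = ρ` and is at least
`A` on the outer sphere `|y - c| = 2ρ`. If `h` exceeded it somewhere, `h + 2A g` would have an
interior maximum at a point where `h > 0`; there `h` is harmonic, so the Laplacian of `h + 2A g`
is positive, which is impossible at a maximum. Finally `1 - exp (-t) ≤ t` bounds the barrier by
a multiple of the distance to the inner sphere.
-/

open Metric Set

noncomputable def lapl {n : ℕ} (f : EuclideanSpace ℝ (Fin n) → ℝ)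
    (x : EuclideanSpace ℝ (Fin n)) : ℝ :=
  ∑ i : Fin n, fderiv ℝ (fun y => fderiv ℝ f y (EuclideanSpace.single i (1:ℝ))) x
    (EuclideanSpace.single i (1:ℝ))

def IsHarmonicOn {n : ℕ} (f : EuclideanSpace ℝ (Fin n) → ℝ)
    (U : Set (EuclideanSpace ℝ (Fin n))) : Prop :=
  ContDiffOn ℝ 2 f U ∧ ∀ x ∈ U, lapl f x = 0

open InnerProductSpace Laplacian Module Filter Topology

section SecondDerivativeTest

lemma deriv_deriv_nonpos_of_isLocalMax {f : ℝ → ℝ} {x : ℝ} (hf : ContinuousAt f x)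
    (hmax : IsLocalMax f x) : deriv (deriv f) x ≤ 0 := by
  by_contra! hpos
  have hmin : IsLocalMin f x := isLocalMin_of_deriv_deriv_pos hpos hmax.deriv_eq_zero hf
  have hconst : f =ᶠ[𝓝 x] fun _ => f x := by
    filter_upwards [hmax, hmin] with y hle hge using le_antisymm hle hge
  have hzero : deriv (deriv f) x = 0 := by
    rw [hconst.deriv.deriv_eq]
    simp
  exact hpos.ne' hzero

variable {E : Type*} [NormedAddCommGroup E] [NormedSpace ℝ E]

lemma hasFDerivAt_fderiv_apply {F : Type*} [NormedAddCommGroup F] [NormedSpace ℝ F] {f : E → F}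
    {x : E} (hf : ContDiffAt ℝ 2 f x) (v : E) :
    HasFDerivAt (fun y => fderiv ℝ f y v) ((fderiv ℝ (fderiv ℝ f) x).flip v) x := by
  have hfderiv : DifferentiableAt ℝ (fderiv ℝ f) x :=
    (hf.fderiv_right (m := 1) (by norm_num)).differentiableAt one_ne_zero
  simpa using hfderiv.hasFDerivAt.clm_apply (hasFDerivAt_const v x)

lemma deriv_deriv_comp_add_smul {F : Type*} [NormedAddCommGroup F] [NormedSpace ℝ F] {f : E → F}
    {x : E} (hf : ContDiffAt ℝ 2 f x) (v : E) :
    deriv (deriv fun t : ℝ => f (x + t • v)) 0 = iteratedFDeriv ℝ 2 f x ![v, v] := by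
  have hline (t : ℝ) : HasDerivAt (fun t : ℝ => x + t • v) v t := by
    simpa using ((hasDerivAt_id t).smul_const v).const_add x
  have htendsto : Tendsto (fun t : ℝ => x + t • v) (𝓝 0) (𝓝 x) := by
    simpa using (hline 0).continuousAt.tendsto
  have hfirst : deriv (fun t : ℝ => f (x + t • v)) =ᶠ[𝓝 0] fun t => fderiv ℝ f (x + t • v) v := by
    filter_upwards [htendsto.eventually (hf.eventually (by simp))] with t ht
    exact ((ht.differentiableAt (by simp)).hasFDerivAt.comp_hasDerivAt t (hline t)).deriv
  have hsecond : HasDerivAt (fun t : ℝ => fderiv ℝ f (x + t • v) v)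
      ((fderiv ℝ (fderiv ℝ f) x).flip v v) 0 :=
    (hasFDerivAt_fderiv_apply hf v).comp_hasDerivAt_of_eq 0 (hline 0) (by simp)
  rw [hfirst.deriv_eq, hsecond.deriv, iteratedFDeriv_two_apply]
  rfl

lemma iteratedFDeriv_two_nonpos_of_isLocalMax {f : E → ℝ} {x : E} (hf : ContDiffAt ℝ 2 f x)
    (hmax : IsLocalMax f x) (v : E) : iteratedFDeriv ℝ 2 f x ![v, v] ≤ 0 := by
  have hline : ContinuousAt (fun t : ℝ => x + t • v) 0 := by fun_prop
  have htendsto : Tendsto (fun t : ℝ => x + t • v) (𝓝 0) (𝓝 x) := by simpa using hline.tendsto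
  have hcont : ContinuousAt (fun t : ℝ => f (x + t • v)) 0 :=
    ContinuousAt.comp' (by simpa using hf.continuousAt) hline
  have hmax_line : IsLocalMax (fun t : ℝ => f (x + t • v)) 0 := by
    filter_upwards [htendsto.eventually hmax] with t ht
    simpa using ht
  exact deriv_deriv_comp_add_smul hf v ▸ deriv_deriv_nonpos_of_isLocalMax hcont hmax_line

end SecondDerivativeTest

section MaximumPrinciple

variable {E : Type*} [NormedAddCommGroup E] [InnerProductSpace ℝ E] [FiniteDimensional ℝ E]
  {f : E → ℝ} {x : E} {K : Set E} {M : ℝ}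

lemma laplacian_nonpos_of_isLocalMax (hf : ContDiffAt ℝ 2 f x) (hmax : IsLocalMax f x) :
    Δ f x ≤ 0 := by
  rw [laplacian_eq_iteratedFDeriv_stdOrthonormalBasis]
  exact Finset.sum_nonpos fun _ _ => iteratedFDeriv_two_nonpos_of_isLocalMax hf hmax _

lemma le_of_forall_frontier_le_of_laplacian_pos (hK : IsCompact K) (hf : ContinuousOn f K)
    (hfrontier : ∀ y ∈ frontier K, f y ≤ M)
    (hinterior : ∀ y ∈ interior K, M < f y → ContDiffAt ℝ 2 f y ∧ 0 < Δ f y) (hx : x ∈ K) :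
    f x ≤ M := by
  obtain ⟨z, hzK, hzmax⟩ := hK.exists_isMaxOn ⟨x, hx⟩ hf
  refine (hzmax hx).trans ?_
  by_contra! hlt
  have hz : z ∈ interior K := by
    by_contra hz
    exact (hfrontier z ⟨subset_closure hzK, hz⟩).not_gt hlt
  obtain ⟨hsmooth, hpos⟩ := hinterior z hz hlt
  have hmax : IsLocalMax f z := hzmax.isLocalMax (mem_interior_iff_mem_nhds.1 hz)
  exact (laplacian_nonpos_of_isLocalMax hsmooth hmax).not_gt hpos

end MaximumPrinciple

section GaussianBarrier

variable {E : Type*} [NormedAddCommGroup E]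

/-- The Gaussian `y ↦ exp (a * (r² - |y - c|²))` centred at `c` and normalized to equal `1` on the
sphere of radius `r`; positive multiples of `1 - normalizedGaussian c a r` serve as barriers. -/
noncomputable def normalizedGaussian (c : E) (a r : ℝ) (y : E) : ℝ :=
  Real.exp (a * (r ^ 2 - ‖y - c‖ ^ 2))

variable {c x : E} {a r : ℝ}

lemma normalizedGaussian_of_mem_sphere (hx : x ∈ sphere c r) : normalizedGaussian c a r x = 1 := by
  simp [normalizedGaussian, mem_sphere_iff_norm.1 hx]

lemma normalizedGaussian_le_one (ha : 0 ≤ a) (hr : 0 ≤ r) (hx : r ≤ ‖x - c‖) :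
    normalizedGaussian c a r x ≤ 1 := by
  refine Real.exp_le_one_iff.2 (mul_nonpos_of_nonneg_of_nonpos ha (sub_nonpos.2 ?_))
  gcongr

lemma one_sub_normalizedGaussian_le :
    1 - normalizedGaussian c a r x ≤ a * (‖x - c‖ ^ 2 - r ^ 2) := by
  rw [normalizedGaussian]
  linarith [Real.add_one_le_exp (a * (r ^ 2 - ‖x - c‖ ^ 2))]

variable [InnerProductSpace ℝ E] (c a r)

lemma contDiff_normalizedGaussian {m : WithTop ℕ∞} : ContDiff ℝ m (normalizedGaussian c a r) :=
  (contDiff_const.mul (contDiff_const.sub ((contDiff_id.sub contDiff_const).norm_sq ℝ))).exp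

lemma iteratedFDeriv_two_normalizedGaussian (v : E) :
    iteratedFDeriv ℝ 2 (normalizedGaussian c a r) x ![v, v] =
      normalizedGaussian c a r x * (4 * a ^ 2 * inner ℝ (x - c) v ^ 2 - 2 * a * ‖v‖ ^ 2) := by
  have hline (t : ℝ) : HasDerivAt (fun t : ℝ => x + t • v - c) v t := by
    simpa using (((hasDerivAt_id t).smul_const v).const_add x).sub_const c
  have hfirst (t : ℝ) : HasDerivAt (fun t : ℝ => normalizedGaussian c a r (x + t • v))
      (normalizedGaussian c a r (x + t • v) * (-2 * a * inner ℝ (x + t • v - c) v)) t := by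
    refine (((hline t).norm_sq.const_sub (r ^ 2)).const_mul a).exp.congr_deriv ?_
    rw [normalizedGaussian]
    ring
  have hinner : HasDerivAt (fun t : ℝ => inner ℝ (x + t • v - c) v) (‖v‖ ^ 2) 0 := by
    simpa using (hline 0).inner ℝ (hasDerivAt_const 0 v)
  rw [← deriv_deriv_comp_add_smul (contDiff_normalizedGaussian c a r).contDiffAt v,
    deriv_eq hfirst, ((hfirst 0).fun_mul (hinner.const_mul (-2 * a))).deriv]
  simp only [zero_smul, add_zero]
  ring

variable [FiniteDimensional ℝ E]

lemma laplacian_normalizedGaussian :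
    Δ (normalizedGaussian c a r) x =
      normalizedGaussian c a r x * (4 * a ^ 2 * ‖x - c‖ ^ 2 - 2 * a * finrank ℝ E) := by
  simp only [laplacian_eq_iteratedFDeriv_stdOrthonormalBasis, iteratedFDeriv_two_normalizedGaussian,
    OrthonormalBasis.norm_eq_one, ← Finset.mul_sum, Finset.sum_sub_distrib,
    OrthonormalBasis.sum_sq_inner_left]
  simp [mul_comm]

variable {c a r} in
lemma laplacian_normalizedGaussian_pos (ha : 0 < a)
    (hx : finrank ℝ E < 2 * a * ‖x - c‖ ^ 2) : 0 < Δ (normalizedGaussian c a r) x := by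
  rw [laplacian_normalizedGaussian]
  refine mul_pos (Real.exp_pos _) ?_
  linarith [mul_pos ha (sub_pos.2 hx)]

end GaussianBarrier

section Annulus

lemma frontier_closedBall_sdiff_ball_subset {X : Type*} [PseudoMetricSpace X] (c : X) (r R : ℝ) :
    frontier (closedBall c R \ ball c r) ⊆ sphere c R ∪ sphere c r := by
  rw [sdiff_eq]
  refine (frontier_inter_subset _ _).trans (union_subset_union ?_ ?_)
  · exact inter_subset_left.trans frontier_closedBall_subset_sphere
  · rw [frontier_compl]
    exact inter_subset_right.trans frontier_ball_subset_sphere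

lemma interior_closedBall_sdiff_ball {V : Type*} [SeminormedAddCommGroup V] [NormedSpace ℝ V]
    (c : V) {r R : ℝ} (hr : r ≠ 0) (hR : R ≠ 0) :
    interior (closedBall c R \ ball c r) = ball c R \ closedBall c r := by
  rw [sdiff_eq, interior_inter, interior_compl, interior_closedBall c hR, closure_ball c hr,
    sdiff_eq]

variable {E : Type*} [NormedAddCommGroup E] [InnerProductSpace ℝ E] [FiniteDimensional ℝ E]
  {c x : E} {h : E → ℝ} {r R M a : ℝ}

lemma le_mul_one_sub_normalizedGaussian (hr : 0 < r) (hrR : r < R) (ha : 0 < a)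
    (har : finrank ℝ E ≤ 2 * a * r ^ 2) (hM : 0 < M)
    (hcont : ContinuousOn h (closedBall c R \ ball c r))
    (hinner : ∀ y ∈ sphere c r, h y ≤ 0)
    (houter : ∀ y ∈ sphere c R, h y ≤ M * (1 - normalizedGaussian c a r y))
    (hsub : ∀ y ∈ ball c R \ closedBall c r, 0 < h y → ContDiffAt ℝ 2 h y ∧ 0 ≤ Δ h y)
    (hx : x ∈ closedBall c R \ ball c r) :
    h x ≤ M * (1 - normalizedGaussian c a r x) := by
  have hg : ContDiff ℝ 2 (M • normalizedGaussian c a r) :=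
    (contDiff_normalizedGaussian c a r).const_smul M
  suffices (h + M • normalizedGaussian c a r) x ≤ M by
    simp only [Pi.add_apply, Pi.smul_apply, smul_eq_mul] at this
    linarith
  refine le_of_forall_frontier_le_of_laplacian_pos ((isCompact_closedBall c R).diff isOpen_ball)
    (hcont.add hg.continuous.continuousOn) (fun y hy => ?_) (fun y hy hMy => ?_) hx
  · simp only [Pi.add_apply, Pi.smul_apply, smul_eq_mul]
    rcases frontier_closedBall_sdiff_ball_subset c r R hy with hyR | hyr
    · linarith [houter y hyR]
    · simpa [normalizedGaussian_of_mem_sphere hyr] using hinner y hyr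
  · rw [interior_closedBall_sdiff_ball c hr.ne' (hr.trans hrR).ne'] at hy
    have hry : r < ‖y - c‖ := by simpa [dist_eq_norm] using hy.2
    have hpos : 0 < h y := by
      simp only [Pi.add_apply, Pi.smul_apply, smul_eq_mul] at hMy
      linarith [mul_le_of_le_one_right hM.le (normalizedGaussian_le_one ha.le hr.le hry.le)]
    obtain ⟨hsmooth, hlap⟩ := hsub y hy hpos
    refine ⟨hsmooth.add hg.contDiffAt, ?_⟩
    rw [hsmooth.laplacian_add hg.contDiffAt,
      laplacian_smul M (contDiff_normalizedGaussian c a r).contDiffAt]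
    have hg_pos : 0 < Δ (normalizedGaussian c a r) y :=
      laplacian_normalizedGaussian_pos ha (har.trans_lt (by gcongr))
    exact add_pos_of_nonneg_of_pos hlap (mul_pos hM hg_pos)

end Annulus

section Harmonic

variable {n : ℕ} {f : EuclideanSpace ℝ (Fin n) → ℝ} {x : EuclideanSpace ℝ (Fin n)}
  {U : Set (EuclideanSpace ℝ (Fin n))}

lemma lapl_eq_laplacian (hf : ContDiffAt ℝ 2 f x) : lapl f x = Δ f x := by
  rw [laplacian_eq_iteratedFDeriv_orthonormalBasis f (EuclideanSpace.basisFun (Fin n) ℝ)]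
  refine Finset.sum_congr rfl fun i _ => ?_
  simp [(hasFDerivAt_fderiv_apply hf _).fderiv, iteratedFDeriv_two_apply]

lemma IsHarmonicOn.harmonicOnNhd (hf : IsHarmonicOn f U) (hU : IsOpen U) : HarmonicOnNhd f U := by
  intro x hx
  refine ⟨hf.1.contDiffAt (hU.mem_nhds hx), ?_⟩
  filter_upwards [hU.mem_nhds hx] with y hy
  rw [← lapl_eq_laplacian (hf.1.contDiffAt (hU.mem_nhds hy)), hf.2 y hy, Pi.zero_apply]

lemma IsHarmonicOn.harmonicAt_of_pos (hf : IsHarmonicOn f ({y | 0 < f y} ∩ U)) (hU : IsOpen U)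
    (hcont : ContinuousOn f U) (hx : x ∈ U) (hpos : 0 < f x) : HarmonicAt f x := by
  have hopen : IsOpen ({y | 0 < f y} ∩ U) :=
    inter_comm U _ ▸ hcont.isOpen_inter_preimage hU isOpen_Ioi
  exact hf.harmonicOnNhd hopen x ⟨hpos, hx⟩

end Harmonic

theorem stmt4_general {E : Type*} [NormedAddCommGroup E] [InnerProductSpace ℝ E]
    [FiniteDimensional ℝ E] {c x : E} {h : E → ℝ} {ρ A : ℝ} (hρ : 0 < ρ) (hA : 0 < A)
    (hcont : ContinuousOn h (closedBall c (2 * ρ) \ ball c ρ))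
    (hinner : ∀ y ∈ sphere c ρ, h y ≤ 0) (houter : ∀ y ∈ sphere c (2 * ρ), h y ≤ A)
    (hsub : ∀ y ∈ ball c (2 * ρ) \ closedBall c ρ, 0 < h y → ContDiffAt ℝ 2 h y ∧ 0 ≤ Δ h y)
    (hx : x ∈ closedBall c (2 * ρ) \ ball c ρ) :
    h x ≤ 3 * (finrank ℝ E + 1) * A * (dist x c - ρ) / ρ := by
  have hxρ : ρ ≤ dist x c := by simpa using hx.2
  have hx2ρ : dist x c ≤ 2 * ρ := hx.1
  set k : ℝ := finrank ℝ E + 1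
  have hk : 1 ≤ k := by simp [k]
  set a : ℝ := k / (2 * ρ ^ 2) with ha
  have haρ : 2 * a * ρ ^ 2 = k := by rw [ha]; field_simp
  have houter_barrier (y : E) (hy : y ∈ sphere c (2 * ρ)) :
      h y ≤ 2 * A * (1 - normalizedGaussian c a ρ y) := by
    have hexponent : a * (ρ ^ 2 - ‖y - c‖ ^ 2) = -(3 / 2 * k) := by
      rw [mem_sphere_iff_norm.1 hy]
      linear_combination (-3 / 2) * haρ
    have hg : normalizedGaussian c a ρ y ≤ 2⁻¹ := by
      rw [normalizedGaussian, hexponent, Real.exp_neg]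
      gcongr
      linarith [Real.add_one_le_exp (3 / 2 * k)]
    linarith [houter y hy, mul_le_mul_of_nonneg_left hg hA.le]
  calc h x ≤ 2 * A * (1 - normalizedGaussian c a ρ x) :=
        le_mul_one_sub_normalizedGaussian hρ (by linarith) (by positivity)
          (by rw [haρ]; simp [k]) (by positivity) hcont hinner houter_barrier hsub hx
    _ ≤ 2 * A * (a * (dist x c ^ 2 - ρ ^ 2)) := by
        rw [dist_eq_norm]
        gcongr
        exact one_sub_normalizedGaussian_le
    _ = k * A * (dist x c - ρ) / ρ * ((dist x c + ρ) / ρ) := by rw [ha]; field_simp; ring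
    _ ≤ k * A * (dist x c - ρ) / ρ * 3 := by
        have := sub_nonneg.2 hxρ
        gcongr
        rw [div_le_iff₀ hρ]
        linarith
    _ = 3 * k * A * (dist x c - ρ) / ρ := by ring

theorem stmt4 (n : ℕ) :
    ∃ C : ℝ, 0 < C ∧
      ∀ (ρ A : ℝ) (c : EuclideanSpace ℝ (Fin n)) (h : EuclideanSpace ℝ (Fin n) → ℝ),
        0 < ρ → 0 < A →
        ContinuousOn h (closedBall c (2*ρ)) →
        (∀ x ∈ closedBall c (2*ρ), 0 ≤ h x ∧ h x ≤ A) →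
        (∀ x ∈ closedBall c ρ, h x = 0) →
        IsHarmonicOn h ({x | 0 < h x} ∩ ball c (2*ρ)) →
        ∀ x : EuclideanSpace ℝ (Fin n), ρ ≤ dist x c → dist x c ≤ 3*ρ/2 →
          h x ≤ C * A * (dist x c - ρ) / ρ := by
  refine ⟨3 * (n + 1), by positivity, fun ρ A c h hρ hA hcont hbound hzero hharm x hxρ hx => ?_⟩
  have hsub (y) (hy : y ∈ ball c (2 * ρ) \ closedBall c ρ) (hpos : 0 < h y) :
      ContDiffAt ℝ 2 h y ∧ 0 ≤ Δ h y :=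
    (hharm.harmonicAt_of_pos isOpen_ball (hcont.mono ball_subset_closedBall) hy.1 hpos).imp_right
      fun hΔ => hΔ.eq_of_nhds.ge
  simpa only [finrank_euclideanSpace_fin] using stmt4_general hρ hA (hcont.mono sdiff_subset)
    (fun y hy => (hzero y (sphere_subset_closedBall hy)).le)
    (fun y hy => (hbound y (sphere_subset_closedBall hy)).2) hsub
    ⟨mem_closedBall.2 (by linarith), by simpa using hxρ⟩
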